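/- Let m ≥ 2 and let (B,P) be a linear multi-domain representation over observed index sets V_1,…,V_m and latent index data H = L ∪ I_1 ∪ ⋯ ∪ I_m (with S_e = L ∪ I_e), whose marginals P_i all have mean zero and unit variance and are non-symmetric (P_i ≠ (−1)#P_i), and such that B_{V_e,S_e} has full column rank for every domain e. Suppose one of the following holds: (i) there exist distinct i, j ∈ L with P_i = P_j or P_i = (−1)#P_j; (ii) there exist i ∈ L and j ∈ I_e for some e with P_i = P_j or P_i = (−1)#P_j; (iii) for every e ∈ {1,…,m} there exists i_e ∈ I_e such that for all e ≠ f, P_{i_e} = P_{i_f} or P_{i_e} = (−1)#P_{i_f}. Then the joint distribution is not identifiable from the domain marginals: there exist multi-domain index data H̃ = L̃ ∪ Ĩ_1 ∪ ⋯ ∪ Ĩ_m over the same observed sets V_1,…,V_m and a linear multi-domain representation (B̃, P̃) over this data, with all marginals of P̃ of mean zero and unit variance and with B̃_{V_e,S̃_e} of full column rank for every e, such that B̃_{V_e,·}#P̃ = B_{V_e,·}#P for every domain e, but B̃#P̃ ≠ B#P. -/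

import Mathlib

open MeasureTheory

/-!
In the covariance `B Bᵀ` a latent variable shared by two domains ties its column in one domain to
its column in the other. Latent variables with the same distribution up to sign are interchangeable
inside one domain, so the columns of the domains can be paired differently, by a signed injection of
the new latent indices into the old ones for each domain, without changing any domain marginal. If
two domains read the same shared latent variable from different old columns, then equality of the
covariances would, by full column rank in both domains, identify two distinct columns of one domain
up to sign.
-/

open ProbabilityTheory Function
open scoped Matrix

section ProductMeasure

variable {ι κ : Type*} [Fintype ι] [Fintype κ]

lemma measurePreserving_pi_comp_of_injective {α : ι → Type*} [∀ i, MeasurableSpace (α i)]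
    (μ : ∀ i, Measure (α i)) [∀ i, IsProbabilityMeasure (μ i)] {σ : κ → ι} (hσ : Injective σ) :
    MeasurePreserving (fun (x : ∀ i, α i) k => x (σ k)) (Measure.pi μ)
      (Measure.pi fun k => μ (σ k)) where
  measurable := by fun_prop
  map_eq := by
    have hindep : iIndepFun (fun i (x : ∀ i, α i) => x i) (Measure.pi μ) :=
      iIndepFun_pi (X := fun i (t : α i) => t) fun _ => aemeasurable_id
    rw [(hindep.precomp hσ).map_fun_eq_pi_map fun k => (measurable_pi_apply (σ k)).aemeasurable]
    simp only [(measurePreserving_eval μ _).map_eq]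

end ProductMeasure

section SignMultiplication

lemma measurePreserving_one_mul {R : Type*} [MulOneClass R] [MeasurableSpace R] (μ : Measure R) :
    MeasurePreserving ((1 : R) * ·) μ μ := by
  simp only [one_mul]
  exact .id μ

lemma measurePreserving_mul_symm {R : Type*} [Monoid R] [MeasurableSpace R] [MeasurableMul R]
    {μ ν : Measure R} {s : R} (hs : s * s = 1) (h : MeasurePreserving (s * ·) μ ν) :
    MeasurePreserving (s * ·) ν μ := by
  have hinv : (s * ·) ∘ (s * ·) = (id : R → R) := funext fun t => by
    simp only [comp_apply, ← mul_assoc, hs, one_mul, id]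
  rw [← h.map_eq]
  exact .map_of_comp (hinv ▸ .id μ) (measurable_const_mul s) (measurable_const_mul s)

lemma exists_sign_measurePreserving_mul {μ ν : Measure ℝ}
    (h : μ = ν ∨ μ = Measure.map (fun t : ℝ => -t) ν) :
    ∃ s : ℝ, s * s = 1 ∧ MeasurePreserving (s * ·) ν μ := by
  rcases h with rfl | rfl
  · exact ⟨1, one_mul 1, measurePreserving_one_mul μ⟩
  · exact ⟨-1, by norm_num, measurable_const_mul _, by simp⟩

end SignMultiplication

lemma memLp_two_of_integral_sq_ne_zero {Ω : Type*} [MeasurableSpace Ω] {P : Measure Ω} {X : Ω → ℝ}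
    (hX : AEStronglyMeasurable X P) (h : ∫ ω, X ω ^ 2 ∂P ≠ 0) : MemLp X 2 P :=
  (memLp_two_iff_integrable_sq hX).2 (not_imp_comm.1 integral_undef h)

/-- A measure on the line with mean zero and second moment one; for a probability measure, mean zero
and unit variance. Since an undefined integral is `0`, the second clause includes square
integrability. -/
structure IsStandardized (μ : Measure ℝ) : Prop where
  integral_id : ∫ x, x ∂μ = 0
  integral_sq : ∫ x, x ^ 2 ∂μ = 1

namespace IsStandardized

lemma memLp_two {μ : Measure ℝ} (hμ : IsStandardized μ) : MemLp (fun x => x) 2 μ :=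
  memLp_two_of_integral_sq_ne_zero (by fun_prop) (by simp [hμ.integral_sq])

lemma of_measurePreserving_mul {μ ν : Measure ℝ} {s : ℝ} (hμ : IsStandardized μ)
    (hs : s * s = 1) (h : MeasurePreserving (s * ·) μ ν) : IsStandardized ν where
  integral_id := by
    rw [← h.map_eq, integral_map (by fun_prop) (by fun_prop), integral_const_mul, hμ.integral_id,
      mul_zero]
  integral_sq := by
    rw [← h.map_eq, integral_map (by fun_prop) (by fun_prop)]
    simp only [mul_pow, integral_const_mul, hμ.integral_sq, sq s, hs, mul_one]

end IsStandardized

section SecondMoments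

variable {V H K : Type*} [Fintype H] [Fintype K]

lemma integral_eval_mul_eval_pi [DecidableEq H] {μ : H → Measure ℝ}
    [∀ i, IsProbabilityMeasure (μ i)] (hμ : ∀ i, IsStandardized (μ i)) (h k : H) :
    ∫ x, x h * x k ∂Measure.pi μ = (1 : Matrix H H ℝ) h k := by
  rw [Matrix.one_apply]
  split_ifs with hhk
  · subst hhk
    simp_rw [← sq]
    rw [integral_comp_eval (μ := μ) (f := fun t : ℝ => t ^ 2) (by fun_prop), (hμ h).integral_sq]
  · have hindep : iIndepFun (fun i (x : H → ℝ) => x i) (Measure.pi μ) :=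
      iIndepFun_pi (X := fun _ (t : ℝ) => t) fun _ => aemeasurable_id
    rw [(hindep.indepFun hhk).integral_fun_mul_eq_mul_integral
      (measurable_pi_apply h).aestronglyMeasurable (measurable_pi_apply k).aestronglyMeasurable,
      integral_eval, (hμ h).integral_id, zero_mul]

lemma integral_mulVec_mul_mulVec_pi {μ : H → Measure ℝ} [∀ i, IsProbabilityMeasure (μ i)]
    (hμ : ∀ i, IsStandardized (μ i)) (B : Matrix V H ℝ) (v w : V) :
    ∫ x, (B *ᵥ x) v * (B *ᵥ x) w ∂Measure.pi μ = (B * Bᵀ) v w := by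
  classical
  have hint (h k : H) : Integrable (fun x : H → ℝ => x h * x k) (Measure.pi μ) :=
    ((hμ h).memLp_two.comp_measurePreserving (measurePreserving_eval μ h)).integrable_mul
      ((hμ k).memLp_two.comp_measurePreserving (measurePreserving_eval μ k))
  have hexpand (x : H → ℝ) :
      (B *ᵥ x) v * (B *ᵥ x) w = ∑ h, ∑ k, B v h * B w k * (x h * x k) := by
    simp only [Matrix.mulVec, dotProduct, Finset.sum_mul_sum, mul_mul_mul_comm]
  simp_rw [hexpand]
  rw [integral_finsetSum _ fun h _ => integrable_finsetSum _ fun k _ => (hint h k).const_mul _]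
  simp_rw [integral_finsetSum _ fun k _ => (hint _ k).const_mul _, integral_const_mul,
    integral_eval_mul_eval_pi hμ, Matrix.one_apply]
  simp [Matrix.mul_apply]

lemma measurable_mulVec (B : Matrix V H ℝ) : Measurable fun x : H → ℝ => B *ᵥ x := by
  unfold Matrix.mulVec dotProduct
  fun_prop

lemma mul_transpose_eq_of_map_mulVec_eq {μ : H → Measure ℝ} [∀ i, IsProbabilityMeasure (μ i)]
    {ν : K → Measure ℝ} [∀ k, IsProbabilityMeasure (ν k)] (hμ : ∀ i, IsStandardized (μ i))
    (hν : ∀ k, IsStandardized (ν k)) {B : Matrix V H ℝ} {C : Matrix V K ℝ}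
    (h : Measure.map (fun x => C *ᵥ x) (Measure.pi ν)
      = Measure.map (fun x => B *ᵥ x) (Measure.pi μ)) :
    C * Cᵀ = B * Bᵀ := by
  ext v w
  have hmeas {P : Measure (V → ℝ)} : AEStronglyMeasurable (fun z : V → ℝ => z v * z w) P := by
    fun_prop
  rw [← integral_mulVec_mul_mulVec_pi hμ, ← integral_mulVec_mul_mulVec_pi hν,
    ← integral_map (measurable_mulVec C).aemeasurable hmeas, h,
    integral_map (measurable_mulVec B).aemeasurable hmeas]

end SecondMoments

section Matrices

variable {V H 𝕜 : Type*} [Fintype H]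

lemma rank_eq_card_iff_mulVec_eq_zero [Field 𝕜] (M : Matrix V H 𝕜) :
    M.rank = Fintype.card H ↔ ∀ c, M *ᵥ c = 0 → c = 0 := by
  rw [Matrix.rank_eq_finrank_span_cols, eq_comm, ← Set.finrank,
    ← linearIndependent_iff_card_eq_finrank_span, ← Matrix.mulVec_injective_iff,
    ← Matrix.coe_mulVecLin, ← LinearMap.ker_eq_bot, LinearMap.ker_eq_bot']

lemma submatrix_val_mulVec [NonUnitalNonAssocSemiring 𝕜] {B : Matrix V H 𝕜} {p : V → Prop}
    {q : H → Prop} [Fintype {k // q k}] (hB : ∀ v, p v → ∀ k, ¬ q k → B v k = 0) (c : H → 𝕜)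
    (v : {v // p v}) :
    (B.submatrix (Subtype.val : {v // p v} → V) (Subtype.val : {k // q k} → H) *ᵥ
      fun k => c k) v = (B *ᵥ c) v :=
  Fintype.sum_of_injective _ Subtype.val_injective _ _
    (fun k hk => mul_eq_zero_of_left (hB v v.2 k fun h => hk ⟨⟨k, h⟩, rfl⟩) (c k)) fun _ => rfl

lemma rank_submatrix_val_eq_card_iff [Field 𝕜] {B : Matrix V H 𝕜} {p : V → Prop} {q : H → Prop}
    [Fintype {k // q k}] (hB : ∀ v, p v → ∀ k, ¬ q k → B v k = 0) :
    (B.submatrix (Subtype.val : {v // p v} → V) (Subtype.val : {k // q k} → H)).rank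
        = Fintype.card {k // q k}
      ↔ ∀ c : H → 𝕜, (∀ v, p v → (B *ᵥ c) v = 0) → ∀ k, q k → c k = 0 := by
  rw [rank_eq_card_iff_mulVec_eq_zero]
  constructor
  · intro h c hc k hk
    exact congrFun (h (fun k => c k) <| funext fun v =>
      (submatrix_val_mulVec hB c v).trans (hc v v.2)) ⟨k, hk⟩
  · intro h c hc
    have hext : (fun k : {k // q k} => extend Subtype.val c 0 k.val) = c :=
      funext fun k => Subtype.val_injective.extend_apply c 0 k
    rw [← hext] at hc ⊢
    exact funext fun k => h _ (fun v hv =>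
      (submatrix_val_mulVec hB _ ⟨v, hv⟩).symm.trans (congrFun hc ⟨v, hv⟩)) k k.2

/-- A matrix is block diagonal iff it commutes with the indicators of the blocks. -/
lemma inv_apply_eq_zero_of_ne {β : Type*} [DecidableEq H] [CommRing 𝕜] {N : Matrix H H 𝕜}
    {b : H → β} (hN : ∀ h k, b h ≠ b k → N h k = 0) {h k : H} (hhk : b h ≠ b k) :
    N⁻¹ h k = 0 := by
  classical
  let D : Matrix H H 𝕜 := Matrix.diagonal fun i => if b i = b h then 1 else 0
  have hcomm : Commute D N := by
    ext i j
    rw [Matrix.diagonal_mul, Matrix.mul_diagonal]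
    by_cases hij : b i = b j
    · rw [hij, mul_comm]
    · rw [hN i j hij, mul_zero, zero_mul]
  have hinv : D * N⁻¹ = N⁻¹ * D := by
    rw [← Matrix.zpow_neg_one]
    exact Matrix.Commute.zpow_right hcomm (-1)
  simpa [D, Matrix.diagonal_mul, Matrix.mul_diagonal, hhk.symm] using congrFun₂ hinv h k

end Matrices

/-- The latent indices `S_e = L ∪ I_e` seen by domain `e`. The partition of the latent indices is
encoded by `blk`, whose value is `none` on `L` and `some e` on `I_e`. -/
def latentSet {E H : Type*} (blk : H → Option E) (e : E) : Set H :=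
  {k | blk k = none ∨ blk k = some e}

lemma mem_latentSet {E H : Type*} {blk : H → Option E} {e : E} {k : H} :
    k ∈ latentSet blk e ↔ blk k = none ∨ blk k = some e := Iff.rfl

lemma mul_inv_one_sub_apply_eq_zero {E V H R : Type*} [Fintype H] [DecidableEq H] [CommRing R]
    {blk : H → Option E} {G : Matrix V H R} {A : Matrix H H R} {v : V} {e : E}
    (hG : ∀ k ∉ latentSet blk e, G v k = 0) (hA : ∀ h k, blk h ≠ blk k → A h k = 0) {k : H}
    (hk : k ∉ latentSet blk e) : (G * (1 - A)⁻¹) v k = 0 := by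
  rw [Matrix.mul_apply]
  refine Finset.sum_eq_zero fun h _ => ?_
  by_cases hhk : blk h = blk k
  · rw [hG h (by simpa only [mem_latentSet, hhk] using hk), zero_mul]
  · have hblock (i j : H) (hij : blk i ≠ blk j) : (1 - A) i j = 0 := by
      rw [Matrix.sub_apply, hA i j hij, Matrix.one_apply_ne (ne_of_apply_ne blk hij), sub_zero]
    rw [inv_apply_eq_zero_of_ne hblock hhk, mul_zero]

/-- How one domain, which sees the old latent indices in `S` with marginals `μ`, can equally well
see the new latent indices in `S'` with marginals `μ'`: the new variable `k` stands for `sign k`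
times the old variable `col k`. -/
structure SignedMatching {H K : Type*} (S : Set H) (μ : H → Measure ℝ) (S' : Set K)
    (μ' : K → Measure ℝ) where
  col : K → H
  sign : K → ℝ
  col_injective : Injective col
  col_mem_iff : ∀ k, col k ∈ S ↔ k ∈ S'
  subset_range_col : S ⊆ Set.range col
  sign_mul_self : ∀ k, sign k * sign k = 1
  measurePreserving_sign_mul : ∀ k, MeasurePreserving (sign k * ·) (μ (col k)) (μ' k)

namespace SignedMatching

section Pullback

variable {H K : Type*} {S : Set H} {μ : H → Measure ℝ} {S' : Set K} {μ' : K → Measure ℝ}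

lemma isStandardized (M : SignedMatching S μ S' μ') (hμ : ∀ i, IsStandardized (μ i)) (k : K) :
    IsStandardized (μ' k) :=
  (hμ _).of_measurePreserving_mul (M.sign_mul_self k) (M.measurePreserving_sign_mul k)

lemma isProbabilityMeasure (M : SignedMatching S μ S' μ') [∀ i, IsProbabilityMeasure (μ i)]
    (k : K) : IsProbabilityMeasure (μ' k) :=
  (M.measurePreserving_sign_mul k).map_eq ▸
    Measure.isProbabilityMeasure_map (M.measurePreserving_sign_mul k).measurable.aemeasurable

variable (M : SignedMatching S μ S' μ')

/-- Rewrites a vector indexed by the old latent indices in terms of the new ones. -/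
def pullback (y : H → ℝ) : K → ℝ := fun k => M.sign k * y (M.col k)

lemma pullback_surjective : Surjective M.pullback := fun c =>
  ⟨extend M.col (fun k => M.sign k * c k) 0, funext fun k => by
    rw [pullback, M.col_injective.extend_apply, ← mul_assoc, M.sign_mul_self, one_mul]⟩

lemma pullback_apply_eq_zero {a : H → ℝ} (ha : ∀ h ∉ S, a h = 0) {k : K} (hk : k ∉ S') :
    M.pullback a k = 0 := by
  rw [pullback, ha _ (mt (M.col_mem_iff k).1 hk), mul_zero]

variable [Fintype H] [Fintype K]

lemma pullback_dotProduct_pullback {a : H → ℝ} (ha : ∀ h ∉ S, a h = 0) (y : H → ℝ) :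
    M.pullback a ⬝ᵥ M.pullback y = a ⬝ᵥ y :=
  Fintype.sum_of_injective M.col M.col_injective _ _
    (fun h hh => by rw [ha h fun hS => hh (M.subset_range_col hS), zero_mul])
    fun k => by rw [pullback, pullback, mul_mul_mul_comm, M.sign_mul_self, one_mul]

lemma measurePreserving_pullback [∀ i, IsProbabilityMeasure (μ i)] :
    MeasurePreserving M.pullback (Measure.pi μ) (Measure.pi μ') :=
  have := M.isProbabilityMeasure
  (measurePreserving_pi _ _ M.measurePreserving_sign_mul).comp
    (measurePreserving_pi_comp_of_injective μ M.col_injective)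

end Pullback

section Mixing

variable {E V H K : Type*} [Fintype H] [Fintype K] {S : E → Set H} {μ : H → Measure ℝ}
  {S' : E → Set K} {μ' : K → Measure ℝ} (M : ∀ e, SignedMatching (S e) μ (S' e) μ') {dom : V → E}
  {B : Matrix V H ℝ}

/-- The mixing matrix `B` with its rows in each domain rewritten in terms of the new latent
indices. -/
def mixing (dom : V → E) (B : Matrix V H ℝ) : Matrix V K ℝ :=
  Matrix.of fun v => (M (dom v)).pullback (B v)

lemma mixing_mulVec_pullback (hB : ∀ v, ∀ h ∉ S (dom v), B v h = 0) (v : V) (y : H → ℝ) :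
    (mixing M dom B *ᵥ (M (dom v)).pullback y) v = (B *ᵥ y) v :=
  (M (dom v)).pullback_dotProduct_pullback (hB v) y

lemma map_mixing_mulVec_eq [∀ i, IsProbabilityMeasure (μ i)]
    (hB : ∀ v, ∀ h ∉ S (dom v), B v h = 0) (e : E) :
    Measure.map (fun x (v : {v // dom v = e}) => (mixing M dom B *ᵥ x) v) (Measure.pi μ')
      = Measure.map (fun x (v : {v // dom v = e}) => (B *ᵥ x) v) (Measure.pi μ) := by
  have hmeas : Measurable fun x (v : {v // dom v = e}) => (mixing M dom B *ᵥ x) v :=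
    measurable_pi_lambda _ fun v => (measurable_pi_apply v.val).comp (measurable_mulVec _)
  rw [← (M e).measurePreserving_pullback.map_eq,
    Measure.map_map hmeas (M e).measurePreserving_pullback.measurable]
  congr 1
  funext y ⟨v, hv⟩
  subst hv
  exact mixing_mulVec_pullback M hB v y

lemma eq_zero_of_mixing_mulVec_eq_zero (hB : ∀ v, ∀ h ∉ S (dom v), B v h = 0) {e : E}
    (hker : ∀ y, (∀ v, dom v = e → (B *ᵥ y) v = 0) → ∀ h ∈ S e, y h = 0) {c : K → ℝ}
    (hc : ∀ v, dom v = e → (mixing M dom B *ᵥ c) v = 0) {k : K} (hk : k ∈ S' e) : c k = 0 := by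
  obtain ⟨y, rfl⟩ := (M e).pullback_surjective c
  have hy : y ((M e).col k) = 0 := by
    refine hker y (fun v hv => ?_) _ (((M e).col_mem_iff k).2 hk)
    subst hv
    rw [← mixing_mulVec_pullback M hB, hc v rfl]
  rw [pullback, hy, mul_zero]

/-- Under equal covariances the row `w` read through the matching of `e` agrees with the row read
through the matching of its own domain, since the rows of `e` cannot tell them apart. -/
lemma pullback_eq_of_mixing_mul_transpose_eq (hB : ∀ v, ∀ h ∉ S (dom v), B v h = 0) {e : E}
    (hker : ∀ y, (∀ v, dom v = e → (B *ᵥ y) v = 0) → ∀ h ∈ S e, y h = 0)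
    (hcov : mixing M dom B * (mixing M dom B)ᵀ = B * Bᵀ) {k : K} (hk : k ∈ S' e) (w : V) :
    (M e).pullback (B w) k = (M (dom w)).pullback (B w) k := by
  refine sub_eq_zero.1 (eq_zero_of_mixing_mulVec_eq_zero M hB hker
    (c := (M e).pullback (B w) - (M (dom w)).pullback (B w)) (fun v hv => ?_) hk)
  subst hv
  rw [Matrix.mulVec_sub, Pi.sub_apply, mixing_mulVec_pullback M hB, sub_eq_zero]
  exact congrFun₂ hcov.symm v w

theorem mixing_mul_transpose_ne (hB : ∀ v, ∀ h ∉ S (dom v), B v h = 0)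
    (hker : ∀ e y, (∀ v, dom v = e → (B *ᵥ y) v = 0) → ∀ h ∈ S e, y h = 0) {e f : E} {k : K}
    (he : k ∈ S' e) (hf : k ∈ S' f) (hne : (M e).col k ≠ (M f).col k) :
    mixing M dom B * (mixing M dom B)ᵀ ≠ B * Bᵀ := by
  classical
  intro hcov
  let c : H → ℝ := Pi.single ((M f).col k) ((M f).sign k) - Pi.single ((M e).col k) ((M e).sign k)
  have hBc (w : V) (hw : dom w = f) : (B *ᵥ c) w = 0 := by
    subst hw
    have hcols := pullback_eq_of_mixing_mul_transpose_eq M hB (hker e) hcov he w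
    simp only [pullback] at hcols
    simp only [c, Matrix.mulVec_sub, Pi.sub_apply, Matrix.mulVec_single, Matrix.col_apply,
      Pi.smul_apply, MulOpposite.smul_eq_mul_unop, MulOpposite.unop_op]
    linear_combination -hcols
  have hsign : (M f).sign k = 0 := by
    simpa [c, hne.symm] using hker f c hBc _ (((M f).col_mem_iff k).2 hf)
  simpa [hsign] using (M f).sign_mul_self k

end Mixing

section Constructions

variable {H K : Type*} {S : Set H} {μ : H → Measure ℝ} {S' : Set K} {μ' : K → Measure ℝ}

/-- The matching in which every latent variable stands for itself. -/
def refl (S : Set H) (μ : H → Measure ℝ) : SignedMatching S μ S μ where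
  col := id
  sign _ := 1
  col_injective := injective_id
  col_mem_iff _ := Iff.rfl
  subset_range_col := by simp
  sign_mul_self _ := one_mul 1
  measurePreserving_sign_mul k := measurePreserving_one_mul (μ k)

/-- Relabels the new latent indices. -/
def reindex {K' : Type*} (M : SignedMatching S μ S' μ') (φ : K' ≃ K) :
    SignedMatching S μ (φ ⁻¹' S') (μ' ∘ φ) where
  col := M.col ∘ φ
  sign := M.sign ∘ φ
  col_injective := M.col_injective.comp φ.injective
  col_mem_iff k := M.col_mem_iff (φ k)
  subset_range_col := by simpa only [φ.surjective.range_comp] using M.subset_range_col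
  sign_mul_self k := M.sign_mul_self (φ k)
  measurePreserving_sign_mul k := M.measurePreserving_sign_mul (φ k)

/-- The matching that exchanges two latent variables with the same distribution up to sign. -/
def swap [DecidableEq H] {i j : H} (hi : i ∈ S) (hj : j ∈ S) {s : ℝ} (hs : s * s = 1)
    (hji : MeasurePreserving (s * ·) (μ j) (μ i)) : SignedMatching S μ S μ where
  col := Equiv.swap i j
  sign k := if k = i ∨ k = j then s else 1
  col_injective := (Equiv.swap i j).injective
  col_mem_iff k := by
    rcases eq_or_ne k i with rfl | hki
    · simp only [Equiv.swap_apply_left, hi, hj]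
    rcases eq_or_ne k j with rfl | hkj
    · simp only [Equiv.swap_apply_right, hi, hj]
    rw [Equiv.swap_apply_of_ne_of_ne hki hkj]
  subset_range_col := by simp
  sign_mul_self k := by split_ifs <;> simp [hs]
  measurePreserving_sign_mul k := by
    rcases eq_or_ne k i with rfl | hki
    · simpa using hji
    rcases eq_or_ne k j with rfl | hkj
    · simpa using measurePreserving_mul_symm hs hji
    simpa [Equiv.swap_apply_of_ne_of_ne hki hkj, hki, hkj] using measurePreserving_one_mul (μ k)

/-- The matching that removes the latent variables in `T` and puts in their place a single new one,
with index `none`, which stands for the only `i ∈ T` seen by the domain. -/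
def merge {T : Set H} {i : H} {S' : Set (Option ↥Tᶜ)} (hST : S ∩ T = {i})
    (hS' : ∀ k : Option ↥Tᶜ, k.elim i Subtype.val ∈ S ↔ k ∈ S') {s : ℝ} (hs : s * s = 1)
    {ν : Measure ℝ} (hν : MeasurePreserving (s * ·) (μ i) ν) :
    SignedMatching S μ S' fun k => k.elim ν fun h => μ h where
  col k := k.elim i Subtype.val
  sign k := k.elim s fun _ => 1
  col_injective := by
    have hi : i ∈ T := (hST.symm ▸ Set.mem_singleton i : i ∈ S ∩ T).2
    rintro (_ | h) (_ | k) hhk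
    · rfl
    · exact absurd ((show i = k.val from hhk) ▸ hi) k.2
    · exact absurd ((show h.val = i from hhk).symm ▸ hi) h.2
    · exact congrArg some (Subtype.ext hhk)
  col_mem_iff := hS'
  subset_range_col h hh := by
    by_cases hT : h ∈ T
    · exact ⟨none, (hST ▸ ⟨hh, hT⟩ : h ∈ ({i} : Set H)).symm⟩
    · exact ⟨some ⟨h, hT⟩, rfl⟩
  sign_mul_self := by rintro (_ | h) <;> simp [hs]
  measurePreserving_sign_mul := by
    rintro (_ | h)
    · exact hν
    · exact measurePreserving_one_mul (μ h)

end Constructions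

end SignedMatching

section Rematching

variable {E H : Type*} {blk : H → Option E} {μ : H → Measure ℝ}

/-- New latent data that every domain can see in place of the old, such that two domains read some
shared new latent variable from different old ones. -/
def IsRematchable (blk : H → Option E) (μ : H → Measure ℝ) : Prop :=
  ∃ (n : ℕ) (blk' : Fin n → Option E) (μ' : Fin n → Measure ℝ)
    (M : ∀ e, SignedMatching (latentSet blk e) μ (latentSet blk' e) μ') (e f : E) (k : Fin n),
    k ∈ latentSet blk' e ∧ k ∈ latentSet blk' f ∧ (M e).col k ≠ (M f).col k

lemma isRematchable_of_finite {K : Type*} [Finite K] {blk' : K → Option E} {μ' : K → Measure ℝ}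
    (M : ∀ e, SignedMatching (latentSet blk e) μ (latentSet blk' e) μ') {e f : E} {k : K}
    (he : k ∈ latentSet blk' e) (hf : k ∈ latentSet blk' f) (hne : (M e).col k ≠ (M f).col k) :
    IsRematchable blk μ := by
  let φ := (Finite.equivFin K).symm
  refine ⟨_, blk' ∘ φ, μ' ∘ φ, fun e => (M e).reindex φ, e, f, φ.symm k, ?_, ?_, ?_⟩
  · rwa [mem_latentSet, comp_apply, φ.apply_symm_apply]
  · rwa [mem_latentSet, comp_apply, φ.apply_symm_apply]
  · simpa only [SignedMatching.reindex, comp_apply, φ.apply_symm_apply] using hne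

lemma isRematchable_of_mem_latentSet [Finite H] {e f : E} {i j : H} (hef : e ≠ f) (hij : i ≠ j)
    (hi : i ∈ latentSet blk e) (hj : j ∈ latentSet blk e) (hif : i ∈ latentSet blk f)
    (hμ : μ i = μ j ∨ μ i = Measure.map (fun t : ℝ => -t) (μ j)) : IsRematchable blk μ := by
  classical
  obtain ⟨s, hs, hji⟩ := exists_sign_measurePreserving_mul hμ
  let M : ∀ g, SignedMatching (latentSet blk g) μ (latentSet blk g) μ :=
    update (fun g => .refl _ μ) e (.swap hi hj hs hji)
  refine isRematchable_of_finite M hi hif ?_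
  simpa [M, hef.symm, SignedMatching.swap, SignedMatching.refl] using hij.symm

lemma isRematchable_of_forall_eq_some [Finite H] [Nontrivial E] {ι : E → H}
    (hι : ∀ e, blk (ι e) = some e)
    (hμ : ∀ e f, e ≠ f → μ (ι e) = μ (ι f) ∨ μ (ι e) = Measure.map (fun t : ℝ => -t) (μ (ι f))) :
    IsRematchable blk μ := by
  classical
  obtain ⟨e₀, e₁, h01⟩ := exists_pair_ne E
  have hsign (e : E) : ∃ s : ℝ, s * s = 1 ∧ MeasurePreserving (s * ·) (μ (ι e)) (μ (ι e₀)) := by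
    rcases eq_or_ne e₀ e with rfl | he
    · exact ⟨1, one_mul 1, measurePreserving_one_mul _⟩
    · exact exists_sign_measurePreserving_mul (hμ e₀ e he)
  choose s hs hpres using hsign
  have hinter (e : E) : latentSet blk e ∩ Set.range ι = {ι e} := by
    ext h
    constructor
    · rintro ⟨hh, f, rfl⟩
      have hfe : f = e := by simpa [mem_latentSet, hι] using hh
      exact congrArg ι hfe
    · rintro rfl
      exact ⟨Or.inr (hι e), e, rfl⟩
  let blk' : Option ↥(Set.range ι)ᶜ → Option E := fun k => k.elim none fun h => blk h
  let M (e : E) := SignedMatching.merge (S' := latentSet blk' e) (hinter e)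
    (by rintro (_ | h) <;> simp [mem_latentSet, blk', hι]) (hs e) (hpres e)
  refine isRematchable_of_finite M (e := e₀) (f := e₁) (k := none) (Or.inl rfl) (Or.inl rfl)
    fun h => h01 (Option.some_injective E ?_)
  rw [← hι e₀, ← hι e₁]
  exact congrArg blk h

lemma isRematchable_of_agreement [Finite H] [Nontrivial E]
    (h : (∃ i j, i ≠ j ∧ blk i = none ∧ blk j = none ∧
        (μ i = μ j ∨ μ i = Measure.map (fun t : ℝ => -t) (μ j))) ∨
      (∃ i j e, blk i = none ∧ blk j = some e ∧
        (μ i = μ j ∨ μ i = Measure.map (fun t : ℝ => -t) (μ j))) ∨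
      (∃ ι : E → H, (∀ e, blk (ι e) = some e) ∧ ∀ e f, e ≠ f →
        μ (ι e) = μ (ι f) ∨ μ (ι e) = Measure.map (fun t : ℝ => -t) (μ (ι f)))) :
    IsRematchable blk μ := by
  rcases h with ⟨i, j, hij, hi, hj, hμ⟩ | ⟨i, j, e, hi, hj, hμ⟩ | ⟨ι, hι, hμ⟩
  · obtain ⟨e, f, hef⟩ := exists_pair_ne E
    exact isRematchable_of_mem_latentSet hef hij (.inl hi) (.inl hj) (.inl hi) hμ
  · obtain ⟨f, hfe⟩ := exists_ne e
    have hij : i ≠ j := ne_of_apply_ne blk (by simp [hi, hj])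
    exact isRematchable_of_mem_latentSet hfe.symm hij (.inl hi) (.inr hj) (.inl hi) hμ
  · exact isRematchable_of_forall_eq_some hι hμ

end Rematching

theorem stmt1_general {E V H : Type*} [Nontrivial E] [DecidableEq E] [Fintype H] [DecidableEq H]
    (dom : V → E) (blk : H → Option E)
    (B : Matrix V H ℝ) (μ : H → Measure ℝ) [∀ i, IsProbabilityMeasure (μ i)]
    (hrep : ∃ (G : Matrix V H ℝ) (A : Matrix H H ℝ),
      (∀ v k, ¬ (blk k = none ∨ blk k = some (dom v)) → G v k = 0) ∧
      IsUnit (1 - A).det ∧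
      (∀ h k, blk h ≠ blk k → A h k = 0) ∧
      B = G * (1 - A)⁻¹)
    (hmean : ∀ i, ∫ x, x ∂(μ i) = 0)
    (hvar : ∀ i, ∫ x, x ^ 2 ∂(μ i) = 1)
    (hrank : ∀ e : E,
      (B.submatrix (Subtype.val : {v // dom v = e} → V)
          (Subtype.val : {k // blk k = none ∨ blk k = some e} → H)).rank
        = Fintype.card {k // blk k = none ∨ blk k = some e})
    (hcases :
      (∃ i j, i ≠ j ∧ blk i = none ∧ blk j = none ∧
        (μ i = μ j ∨ μ i = Measure.map (fun t : ℝ => -t) (μ j))) ∨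
      (∃ i j e, blk i = none ∧ blk j = some e ∧
        (μ i = μ j ∨ μ i = Measure.map (fun t : ℝ => -t) (μ j))) ∨
      (∃ ι : E → H, (∀ e, blk (ι e) = some e) ∧
        ∀ e f, e ≠ f →
          μ (ι e) = μ (ι f) ∨ μ (ι e) = Measure.map (fun t : ℝ => -t) (μ (ι f)))) :
    ∃ (n : ℕ) (blk' : Fin n → Option E) (B' : Matrix V (Fin n) ℝ)
      (μ' : Fin n → Measure ℝ),
      (∀ i, IsProbabilityMeasure (μ' i)) ∧
      (∃ (G : Matrix V (Fin n) ℝ) (A : Matrix (Fin n) (Fin n) ℝ),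
        (∀ v k, ¬ (blk' k = none ∨ blk' k = some (dom v)) → G v k = 0) ∧
        IsUnit (1 - A).det ∧
        (∀ h k, blk' h ≠ blk' k → A h k = 0) ∧
        B' = G * (1 - A)⁻¹) ∧
      (∀ i, ∫ x, x ∂(μ' i) = 0) ∧
      (∀ i, ∫ x, x ^ 2 ∂(μ' i) = 1) ∧
      (∀ e : E,
        (B'.submatrix (Subtype.val : {v // dom v = e} → V)
            (Subtype.val : {k // blk' k = none ∨ blk' k = some e} → Fin n)).rank
          = Fintype.card {k // blk' k = none ∨ blk' k = some e}) ∧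
      (∀ e : E,
        Measure.map (fun x (v : {v // dom v = e}) => B'.mulVec x v.val) (Measure.pi μ')
          = Measure.map (fun x (v : {v // dom v = e}) => B.mulVec x v.val) (Measure.pi μ)) ∧
      Measure.map (fun x => B'.mulVec x) (Measure.pi μ')
        ≠ Measure.map (fun x => B.mulVec x) (Measure.pi μ) := by
  obtain ⟨G, A, hG, -, hA, hfact⟩ := hrep
  have hB (v : V) (k : H) (hk : k ∉ latentSet blk (dom v)) : B v k = 0 :=
    hfact ▸ mul_inv_one_sub_apply_eq_zero (hG v) hA hk
  have hstd (i : H) : IsStandardized (μ i) := ⟨hmean i, hvar i⟩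
  have hker (e : E) :=
    (rank_submatrix_val_eq_card_iff (p := fun v => dom v = e)
      (q := fun k => blk k = none ∨ blk k = some e) fun v hv k hk => hB v k (hv ▸ hk)).1 (hrank e)
  obtain ⟨n, blk', μ', M, e, f, k, he, hf, hne⟩ := isRematchable_of_agreement hcases
  have hprob' := (M e).isProbabilityMeasure
  have hstd' := (M e).isStandardized hstd
  have hB' (v : V) (k : Fin n) (hk : k ∉ latentSet blk' (dom v)) :
      SignedMatching.mixing M dom B v k = 0 := (M (dom v)).pullback_apply_eq_zero (hB v) hk
  refine ⟨n, blk', SignedMatching.mixing M dom B, μ', hprob',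
    ⟨_, 0, hB', by simp, by simp, by simp⟩, fun i => (hstd' i).integral_id,
    fun i => (hstd' i).integral_sq, fun e => ?_, SignedMatching.map_mixing_mulVec_eq M hB,
    mt (mul_transpose_eq_of_map_mulVec_eq hstd hstd')
      (SignedMatching.mixing_mul_transpose_ne M hB hker he hf hne)⟩
  exact (rank_submatrix_val_eq_card_iff (p := fun v => dom v = e)
    (q := fun k => blk' k = none ∨ blk' k = some e) fun v hv k hk => hB' v k (hv ▸ hk)).2
    fun c hc k hk => SignedMatching.eq_zero_of_mixing_mulVec_eq_zero M hB (hker e) hc hk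

/-- **Necessity of pairwise different error distributions (Proposition B.1).**
If the marginals of a linear multi-domain representation coincide (up to sign) in one of
the three listed patterns, then the joint distribution is not identifiable: there is
another linear multi-domain representation over (possibly different) latent index data,
with mean-zero unit-variance marginals and full column rank in every domain, which
produces the same domain marginals but a different joint distribution. -/
theorem stmt1 {V H : Type} [Fintype V] [Fintype H] [DecidableEq V] [DecidableEq H]
    (m : ℕ) (hm : 2 ≤ m) (dom : V → Fin m) (blk : H → Option (Fin m))
    (B : Matrix V H ℝ) (μ : H → Measure ℝ) [∀ i, IsProbabilityMeasure (μ i)]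
    (hrep : ∃ (G : Matrix V H ℝ) (A : Matrix H H ℝ),
      (∀ v k, ¬ (blk k = none ∨ blk k = some (dom v)) → G v k = 0) ∧
      IsUnit (1 - A).det ∧
      (∀ h k, blk h ≠ blk k → A h k = 0) ∧
      B = G * (1 - A)⁻¹)
    (hmean : ∀ i, ∫ x, x ∂(μ i) = 0)
    (hvar : ∀ i, ∫ x, x ^ 2 ∂(μ i) = 1)
    (hnonsym : ∀ i, μ i ≠ Measure.map (fun t : ℝ => -t) (μ i))
    (hrank : ∀ e : Fin m,
      (B.submatrix (Subtype.val : {v // dom v = e} → V)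
          (Subtype.val : {k // blk k = none ∨ blk k = some e} → H)).rank
        = Fintype.card {k // blk k = none ∨ blk k = some e})
    (hcases :
      -- (i) two shared marginals agree up to sign
      (∃ i j, i ≠ j ∧ blk i = none ∧ blk j = none ∧
        (μ i = μ j ∨ μ i = Measure.map (fun t : ℝ => -t) (μ j))) ∨
      -- (ii) a shared marginal agrees up to sign with a domain-specific one
      (∃ i j e, blk i = none ∧ blk j = some e ∧
        (μ i = μ j ∨ μ i = Measure.map (fun t : ℝ => -t) (μ j))) ∨
      -- (iii) in every domain there is a domain-specific marginal, all agreeing up to sign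
      (∃ ι : Fin m → H, (∀ e, blk (ι e) = some e) ∧
        ∀ e f, e ≠ f →
          μ (ι e) = μ (ι f) ∨ μ (ι e) = Measure.map (fun t : ℝ => -t) (μ (ι f)))) :
    ∃ (n : ℕ) (blk' : Fin n → Option (Fin m)) (B' : Matrix V (Fin n) ℝ)
      (μ' : Fin n → Measure ℝ),
      (∀ i, IsProbabilityMeasure (μ' i)) ∧
      (∃ (G : Matrix V (Fin n) ℝ) (A : Matrix (Fin n) (Fin n) ℝ),
        (∀ v k, ¬ (blk' k = none ∨ blk' k = some (dom v)) → G v k = 0) ∧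
        IsUnit (1 - A).det ∧
        (∀ h k, blk' h ≠ blk' k → A h k = 0) ∧
        B' = G * (1 - A)⁻¹) ∧
      (∀ i, ∫ x, x ∂(μ' i) = 0) ∧
      (∀ i, ∫ x, x ^ 2 ∂(μ' i) = 1) ∧
      (∀ e : Fin m,
        (B'.submatrix (Subtype.val : {v // dom v = e} → V)
            (Subtype.val : {k // blk' k = none ∨ blk' k = some e} → Fin n)).rank
          = Fintype.card {k // blk' k = none ∨ blk' k = some e}) ∧
      (∀ e : Fin m,
        Measure.map (fun x (v : {v // dom v = e}) => B'.mulVec x v.val) (Measure.pi μ')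
          = Measure.map (fun x (v : {v // dom v = e}) => B.mulVec x v.val) (Measure.pi μ)) ∧
      Measure.map (fun x => B'.mulVec x) (Measure.pi μ')
        ≠ Measure.map (fun x => B.mulVec x) (Measure.pi μ) := by
  have : Nontrivial (Fin m) := Fin.nontrivial_iff_two_le.2 hm
  exact stmt1_general dom blk B μ hrep hmean hvar hrank hcases
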